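/- Let A be a Hadamard matrix of order h, let d ≥ 1, let B be any h×d matrix with entries in {−1, 1}, let C be the d×h matrix with c_{ij} = sgn((AᵀB)_{ji}), and let F = C A⁻¹ B. Then |f_{ij}| ≤ √h for all 1 ≤ i, j ≤ d. -/

import Mathlib

open Matrix

/-!
`F i j` is the pairing of row `i` of `C` with `A⁻¹` applied to column `j` of `B`. As `Aᴴ A = h I`,
the map `A⁻¹` scales the Euclidean norm by `1 / √h`, while vectors of length `h` with entries of
modulus at most one have norm at most `√h`; Cauchy–Schwarz gives `|F i j| ≤ √h * √h / √h`.
-/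

section

open WithLp (toLp)

variable {𝕜 l m n : Type*} [RCLike 𝕜] [Fintype n]

theorem norm_dotProduct_le (v w : n → 𝕜) :
    ‖v ⬝ᵥ w‖ ≤ ‖toLp 2 v‖ * ‖toLp 2 w‖ := by
  have norm_toLp_star : ‖toLp 2 (star v)‖ = ‖toLp 2 v‖ := by
    simp only [EuclideanSpace.norm_eq, Pi.star_apply, norm_star]
  calc ‖v ⬝ᵥ w‖ = ‖inner 𝕜 (toLp 2 (star v)) (toLp 2 w)‖ := by
        rw [EuclideanSpace.inner_toLp_toLp, star_star, dotProduct_comm]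
    _ ≤ ‖toLp 2 (star v)‖ * ‖toLp 2 w‖ := norm_inner_le_norm _ _
    _ = ‖toLp 2 v‖ * ‖toLp 2 w‖ := by rw [norm_toLp_star]

theorem norm_toLp_le_sqrt_card {E : Type*} [SeminormedAddCommGroup E] {v : n → E}
    (hv : ∀ k, ‖v k‖ ≤ 1) : ‖toLp 2 v‖ ≤ √(Fintype.card n) := by
  rw [PiLp.norm_eq_of_L2]
  gcongr
  calc ∑ k, ‖v k‖ ^ 2 ≤ ∑ _k : n, (1 : ℝ) :=
        Finset.sum_le_sum fun k _ ↦ pow_le_one₀ (norm_nonneg _) (hv k)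
    _ = Fintype.card n := by simp

theorem norm_toLp_mulVec_sq_of_conjTranspose_mul [Fintype m] [DecidableEq n]
    {A : Matrix m n 𝕜} {c : ℝ} (hA : Aᴴ * A = c • 1) (x : n → 𝕜) :
    ‖toLp 2 (A *ᵥ x)‖ ^ 2 = c * ‖toLp 2 x‖ ^ 2 := by
  have gram : star (A *ᵥ x) ⬝ᵥ (A *ᵥ x) = c • (star x ⬝ᵥ x) := by
    rw [star_mulVec, ← dotProduct_mulVec, mulVec_mulVec, hA, smul_mulVec, one_mulVec,
      dotProduct_smul]
  simp only [← @inner_self_eq_norm_sq 𝕜, EuclideanSpace.inner_toLp_toLp,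
    dotProduct_comm _ (star _), gram, RCLike.smul_re]

variable [DecidableEq n] {A : Matrix n n 𝕜} {c : ℝ}

theorem norm_toLp_inv_mulVec_of_conjTranspose_mul (hc : 0 < c)
    (hA : Aᴴ * A = c • 1) (x : n → 𝕜) :
    ‖toLp 2 (A⁻¹ *ᵥ x)‖ = ‖toLp 2 x‖ / √c := by
  have left_inv : (c⁻¹ • Aᴴ) * A = 1 := by
    rw [smul_mul, hA, inv_smul_smul₀ hc.ne']
  have cancel : A *ᵥ (A⁻¹ *ᵥ x) = x := by
    rw [mulVec_mulVec, mul_nonsing_inv _ (isUnit_det_of_left_inverse left_inv), one_mulVec]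
  have norm_sq := norm_toLp_mulVec_sq_of_conjTranspose_mul hA (A⁻¹ *ᵥ x)
  rw [cancel] at norm_sq
  rw [eq_div_iff (Real.sqrt_pos.2 hc).ne', ← sq_eq_sq₀ (by positivity) (norm_nonneg _),
    mul_pow, Real.sq_sqrt hc.le, norm_sq, mul_comm]

theorem norm_mul_inv_mul_apply_le (hc : 0 < c) (hA : Aᴴ * A = c • 1)
    (C : Matrix l n 𝕜) (B : Matrix n m 𝕜) (i : l) (j : m) :
    ‖(C * A⁻¹ * B) i j‖ ≤ ‖toLp 2 (C i)‖ * ‖toLp 2 (B.col j)‖ / √c := by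
  calc ‖(C * A⁻¹ * B) i j‖ = ‖C i ⬝ᵥ (A⁻¹ *ᵥ B.col j)‖ := by rw [Matrix.mul_assoc]; rfl
    _ ≤ ‖toLp 2 (C i)‖ * ‖toLp 2 (A⁻¹ *ᵥ B.col j)‖ := norm_dotProduct_le _ _
    _ = ‖toLp 2 (C i)‖ * ‖toLp 2 (B.col j)‖ / √c := by
      rw [norm_toLp_inv_mulVec_of_conjTranspose_mul hc hA, mul_div_assoc]

theorem abs_F_entry_le_sqrt_general (hA : Aᴴ * A = (Fintype.card n : ℝ) • 1)
    {B : Matrix n m 𝕜} (hB : ∀ i j, ‖B i j‖ ≤ 1)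
    {C : Matrix l n 𝕜} (hC : ∀ i j, ‖C i j‖ ≤ 1) (i : l) (j : m) :
    ‖(C * A⁻¹ * B) i j‖ ≤ √(Fintype.card n) := by
  cases isEmpty_or_nonempty n
  · simp [Matrix.mul_apply]
  calc ‖(C * A⁻¹ * B) i j‖
      ≤ ‖toLp 2 (C i)‖ * ‖toLp 2 (B.col j)‖ / √(Fintype.card n) :=
        norm_mul_inv_mul_apply_le (Nat.cast_pos.2 Fintype.card_pos) hA C B i j
    _ ≤ √(Fintype.card n) * √(Fintype.card n) / √(Fintype.card n) := by
        gcongr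
        exacts [norm_toLp_le_sqrt_card (hC i), norm_toLp_le_sqrt_card (hB · j)]
    _ = √(Fintype.card n) := mul_self_div_self _

end

/-- Let `A` be a Hadamard matrix of order `h` (entries `±1`, `Aᵀ A = h I`),
`d ≥ 1`, `B` an `h × d` matrix with entries in `{−1, 1}`,
`C` the `d × h` matrix with `c_{ij} = sgn((Aᵀ B)_{ji})` (where `sgn x = 1`
if `x ≥ 0`, `−1` otherwise), and `F = C A⁻¹ B`.
Then `|f_{ij}| ≤ √h` for all `i, j`. -/
theorem abs_F_entry_le_sqrt (h d : ℕ) (hd : 1 ≤ d)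
    (A : Matrix (Fin h) (Fin h) ℝ)
    (hA1 : ∀ i j, A i j = 1 ∨ A i j = -1)
    (hA2 : Aᵀ * A = (h : ℝ) • 1)
    (B : Matrix (Fin h) (Fin d) ℝ)
    (hB : ∀ i j, B i j = 1 ∨ B i j = -1)
    (C : Matrix (Fin d) (Fin h) ℝ)
    (hC : ∀ i j, C i j = if 0 ≤ (Aᵀ * B) j i then (1 : ℝ) else -1)
    (F : Matrix (Fin d) (Fin d) ℝ)
    (hF : F = C * A⁻¹ * B) :
    ∀ i j, |F i j| ≤ Real.sqrt h := by
  have norm_B_le i j : ‖B i j‖ ≤ 1 := by rcases hB i j with hij | hij <;> simp [hij]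
  have norm_C_le i j : ‖C i j‖ ≤ 1 := by rw [hC]; split_ifs <;> simp
  simpa [hF] using abs_F_entry_le_sqrt_general (by simpa using hA2) norm_B_le norm_C_le
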